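/- The algebra (ℬ, ⋆) is free on the set 𝔾 of nonempty indivisible B-diagrams: the unique unital ℂ-algebra morphism from the free associative ℂ-algebra on the set 𝔾 to (ℬ, ⋆) sending each generator to the corresponding basis element of ℬ is an isomorphism of algebras. -/

import Mathlib

open scoped BigOperators

structure BD where
  lam : List ℕ
  up : Finset ℕ
  dn : Finset ℕ
  ed : Finset (ℕ × ℕ)
deriving DecidableEq

namespace BD

/-- number of vertices -/
def nv (G : BD) : ℕ := G.lam.length

/-- number of half-edges -/
def omega (G : BD) : ℕ := G.lam.sum

/-- the vertex to which a half-edge belongs -/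
def v (G : BD) (k : ℕ) : ℕ :=
  (List.range G.lam.length).countP (fun i => (G.lam.take i).sum < k)

def Valid (G : BD) : Prop :=
  (∀ x ∈ G.lam, 0 < x) ∧
  G.up ⊆ Finset.Icc 1 G.omega ∧
  G.dn ⊆ Finset.Icc 1 G.omega ∧
  (∀ p ∈ G.ed, p.1 ∈ G.up ∧ p.2 ∈ G.dn ∧ G.v p.1 < G.v p.2) ∧
  (∀ p ∈ G.ed, ∀ q ∈ G.ed, p.1 = q.1 → p = q) ∧
  (∀ p ∈ G.ed, ∀ q ∈ G.ed, p.2 = q.2 → p = q)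

def eps : BD := ⟨[], ∅, ∅, ∅⟩

theorem eps_valid : eps.Valid := by
  refine ⟨?_, ?_, ?_, ?_, ?_, ?_⟩ <;> simp [eps, Valid, omega]

def HfUp (G : BD) : Finset ℕ := G.up \ G.ed.image Prod.fst
def HfDn (G : BD) : Finset ℕ := G.dn \ G.ed.image Prod.snd
def hfUp (G : BD) : ℕ := G.HfUp.card
def hfDn (G : BD) : ℕ := G.HfDn.card
def hc (G : BD) : ℕ :=
  (G.omega - G.ed.card - G.hfUp) + (G.omega - G.ed.card - G.hfDn)

/-- composition of `G'` over `G` along a matching `s` -/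
def comp (G G' : BD) (s : Finset (ℕ × ℕ)) : BD where
  lam := G.lam ++ G'.lam
  up := G.up ∪ G'.up.image (· + G.omega)
  dn := G.dn ∪ G'.dn.image (· + G.omega)
  ed := G.ed ∪ s.image (fun p => (p.1, p.2 + G.omega)) ∪
        G'.ed.image (fun p => (p.1 + G.omega, p.2 + G.omega))

/-- `s` encodes a strictly increasing sequence `a₁ < ⋯ < a_k` of elements of `H_f↑(G)`
matched with pairwise distinct elements `b₁,…,b_k` of `H_f↓(G')`. -/
def Matching (G G' : BD) (s : Finset (ℕ × ℕ)) : Prop :=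
  (∀ p ∈ s, p.1 ∈ G.HfUp ∧ p.2 ∈ G'.HfDn) ∧
  (∀ p ∈ s, ∀ q ∈ s, p.1 = q.1 → p = q) ∧
  (∀ p ∈ s, ∀ q ∈ s, p.2 = q.2 → p = q)

open scoped Classical in
noncomputable def matchings (G G' : BD) : Finset (Finset (ℕ × ℕ)) :=
  (G.HfUp ×ˢ G'.HfDn).powerset.filter (fun s => Matching G G' s)

/-- juxtaposition -/
def juxt (G G' : BD) : BD := comp G G' ∅

def Indiv (G : BD) : Prop :=
  ∀ G₁ G₂ : BD, G₁.Valid → G₂.Valid → G = juxt G₁ G₂ → G₁ = G ∨ G₂ = G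

/-- half-edges attached to the vertices in `I` -/
def HI (G : BD) (I : Finset ℕ) : Finset ℕ :=
  (Finset.Icc 1 G.omega).filter (fun k => G.v k ∈ I)

/-- the increasing relabelling bijection -/
def phi (G : BD) (I : Finset ℕ) (k : ℕ) : ℕ := ((G.HI I).filter (· ≤ k)).card

/-- sub-B-diagram on the set of vertices `I` -/
def sub (G : BD) (I : Finset ℕ) : BD where
  lam := ((List.range G.lam.length).filter (fun i => i + 1 ∈ I)).map (fun i => G.lam.getD i 0)
  up := (G.up ∩ G.HI I).image (G.phi I)
  dn := (G.dn ∩ G.HI I).image (G.phi I)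
  ed := (G.ed.filter (fun p => G.v p.1 ∈ I ∧ G.v p.2 ∈ I)).image
          (fun p => (G.phi I p.1, G.phi I p.2))

def Isolated (G : BD) (I : Finset ℕ) : Prop :=
  ∀ p ∈ G.ed, (G.v p.1 ∈ I ↔ G.v p.2 ∈ I)

def Connected (G : BD) : Prop :=
  ∀ i j : ℕ, 1 ≤ i → i < j → j ≤ G.nv →
    ∃ (k : ℕ) (c : Fin (k + 1) → ℕ × ℕ),
      (∀ ℓ, c ℓ ∈ G.ed) ∧
      (i = G.v (c 0).1 ∨ i = G.v (c 0).2) ∧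
      (j = G.v (c (Fin.last k)).1 ∨ j = G.v (c (Fin.last k)).2) ∧
      ∀ ℓ : Fin k,
        G.v (c ℓ.castSucc).1 = G.v (c ℓ.succ).1 ∨ G.v (c ℓ.castSucc).1 = G.v (c ℓ.succ).2 ∨
        G.v (c ℓ.castSucc).2 = G.v (c ℓ.succ).1 ∨ G.v (c ℓ.castSucc).2 = G.v (c ℓ.succ).2

def IsConnComp (G : BD) (I : Finset ℕ) : Prop :=
  I ⊆ Finset.Icc 1 G.nv ∧ I.Nonempty ∧ (G.sub I).Connected ∧
  ∀ J : Finset ℕ, I ⊆ J → J ⊆ Finset.Icc 1 G.nv → (G.sub J).Connected → J = I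

end BD

open scoped TensorProduct

/-- B-diagrams -/
abbrev BDiagram := {G : BD // G.Valid}

/-- the free `ℂ`-vector space on the set of B-diagrams -/
abbrev BSpace := BDiagram →₀ ℂ

open scoped Classical in
noncomputable def mkB (G : BD) : BSpace :=
  if h : G.Valid then Finsupp.single ⟨G, h⟩ 1 else 0

noncomputable def unitB : BSpace := Finsupp.single ⟨BD.eps, BD.eps_valid⟩ 1

noncomputable def liftB {V : Type*} [AddCommMonoid V] [Module ℂ V] (f : BDiagram → V) :
    BSpace →ₗ[ℂ] V :=
  Finsupp.lsum ℂ fun A => LinearMap.toSpanSingleton ℂ V (f A)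

noncomputable def mulfun (A B : BDiagram) : BSpace :=
  ∑ s ∈ BD.matchings A.1 B.1, mkB (BD.comp A.1 B.1 s)

/-- the product ⋆ of the algebra of B-diagrams, as a bilinear map -/
noncomputable def starB : BSpace →ₗ[ℂ] BSpace →ₗ[ℂ] BSpace :=
  liftB fun A => liftB fun B => mulfun A B

open scoped Classical in
/-- the coproduct evaluated on a B-diagram -/
noncomputable def dfun (A : BDiagram) : BSpace ⊗[ℂ] BSpace :=
  ∑ I ∈ (Finset.Icc 1 A.1.nv).powerset.filter (fun I => A.1.Isolated I),
    mkB (A.1.sub I) ⊗ₜ[ℂ] mkB (A.1.sub (Finset.Icc 1 A.1.nv \ I))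

/-- the coproduct Δ of ℬ -/
noncomputable def deltaL : BSpace →ₗ[ℂ] BSpace ⊗[ℂ] BSpace := liftB dfun

/-- the counit of ℬ -/
noncomputable def counitB : BSpace →ₗ[ℂ] ℂ :=
  liftB fun A => if A.1 = BD.eps then (1 : ℂ) else 0

/-- the set 𝔾 of nonempty indivisible B-diagrams -/
abbrev GSet := {A : BDiagram // A.1 ≠ BD.eps ∧ A.1.Indiv}

/-- product in ℬ of a word of indivisible B-diagrams -/
noncomputable def wordProdB (l : List GSet) : BSpace :=
  (l.map fun g => (Finsupp.single g.1 1 : BSpace)).foldr (fun x acc => starB x acc) unitB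

/-- the linear extension of `wordProdB`, i.e. the unique unital algebra morphism from
the free associative algebra on 𝔾 (realized as the vector space with basis the words
over 𝔾) to `(ℬ, ⋆)` sending each generator to the corresponding B-diagram. -/
noncomputable def PsiB : (List GSet →₀ ℂ) →ₗ[ℂ] BSpace :=
  Finsupp.lsum ℂ fun w => LinearMap.toSpanSingleton ℂ BSpace (wordProdB w)

/-!
A B-diagram `G` is, for each `n`, the composition of the diagram on its last vertices over the
diagram on its first `n` vertices, along a single possible matching: the edges that cross the cut.
So ⋆ is the convolution product dual to cutting, i.e. the coefficient of `G` in `x ⋆ y` is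
`∑ n, x (G.take n) * y (G.drop n)`, which makes ⋆ associative.

A diagram is indivisible exactly when some edge crosses each of its interior cuts, so every diagram
is the juxtaposition of a unique word over 𝔾. The diagrams occurring in the ⋆-product of a word are
its juxtaposition, with coefficient `1`, and diagrams having the same half-edges but more edges.
The products of words are thus unitriangular in the basis of diagrams. Since only finitely many
edges can be added to a diagram, they form a basis.
-/

section Unitriangular

variable {ι κ R : Type*} [Ring R] [PartialOrder κ] {f : ι → κ →₀ R} {lead : ι → κ}

theorem linearIndependent_of_unitriangular (hlead : Function.Injective lead)
    (hone : ∀ i, f i (lead i) = 1) (hle : ∀ i k, f i k ≠ 0 → lead i ≤ k) :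
    LinearIndependent R f := by
  rw [linearIndependent_iff]
  intro c hc
  by_contra hne
  obtain ⟨i, hi, hmin⟩ :=
    Finset.exists_minimalFor lead c.support (Finsupp.support_nonempty_iff.2 hne)
  have hoff : ∀ j ∈ c.support, j ≠ i → c j * f j (lead i) = 0 := fun j hj hji ↦ by
    by_contra hmul
    have hji' := hle j (lead i) (right_ne_zero_of_mul hmul)
    exact hji (hlead (hji'.antisymm (hmin hj hji')))
  have hcoeff : Finsupp.linearCombination R f c (lead i) = c i := by
    rw [Finsupp.linearCombination_apply, Finsupp.sum, Finsupp.finsetSum_apply]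
    simp only [Finsupp.smul_apply, smul_eq_mul]
    rw [Finset.sum_eq_single_of_mem i hi hoff, hone, mul_one]
  exact Finsupp.mem_support_iff.1 hi (by rw [← hcoeff, hc, Finsupp.zero_apply])

theorem span_range_eq_top_of_unitriangular [WellFoundedGT κ] (hlead : Function.Surjective lead)
    (hone : ∀ i, f i (lead i) = 1) (hle : ∀ i k, f i k ≠ 0 → lead i ≤ k) :
    Submodule.span R (Set.range f) = ⊤ := by
  classical
  have hsum {g : κ →₀ R}
      (hg : ∀ k ∈ g.support, Finsupp.single k 1 ∈ Submodule.span R (Set.range f)) :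
      g ∈ Submodule.span R (Set.range f) := by
    rw [← g.sum_single]
    refine Submodule.sum_mem _ fun k hk ↦ ?_
    rw [← Finsupp.smul_single_one]
    exact Submodule.smul_mem _ _ (hg k hk)
  have hsingle (k : κ) : Finsupp.single k 1 ∈ Submodule.span R (Set.range f) := by
    induction k using WellFoundedGT.induction with
    | ind k ih =>
      obtain ⟨i, rfl⟩ := hlead k
      have herase : (f i).erase (lead i) ∈ Submodule.span R (Set.range f) := by
        refine hsum fun k hk ↦ ?_
        rw [Finsupp.support_erase, Finset.mem_erase, Finsupp.mem_support_iff] at hk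
        exact ih k ((hle i k hk.2).lt_of_ne hk.1.symm)
      have hdecomp := Finsupp.single_add_erase (lead i) (f i)
      rw [hone] at hdecomp
      rw [eq_sub_of_add_eq hdecomp]
      exact Submodule.sub_mem _ (Submodule.subset_span ⟨i, rfl⟩) herase
  exact Submodule.eq_top_iff'.2 fun g ↦ hsum fun k _ ↦ hsingle k

end Unitriangular

namespace BD

variable {G A B : BD} {s : Finset (ℕ × ℕ)} {a b i k m n : ℕ}

theorem ext_mem (hlam : A.lam = B.lam) (hup : ∀ k, k ∈ A.up ↔ k ∈ B.up)
    (hdn : ∀ k, k ∈ A.dn ↔ k ∈ B.dn) (hed : ∀ a b, (a, b) ∈ A.ed ↔ (a, b) ∈ B.ed) : A = B := by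
  cases A
  cases B
  simp only [mk.injEq]
  exact ⟨hlam, Finset.ext hup, Finset.ext hdn, Finset.ext fun p ↦ hed p.1 p.2⟩

/-- The number of half-edges attached to the first `n` vertices; the half-edges of the vertex `i`
(counted from `1`) are those in the interval `(G.offset (i - 1), G.offset i]`. -/
def offset (G : BD) (n : ℕ) : ℕ := (G.lam.take n).sum

theorem offset_add_sum_take_drop (G : BD) (m n : ℕ) :
    G.offset m + ((G.lam.drop m).take n).sum = G.offset (m + n) := by
  rw [offset, offset, List.take_add, List.sum_append]

theorem offset_mono (G : BD) : Monotone G.offset :=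
  monotone_nat_of_le_succ fun n ↦ by
    rw [← offset_add_sum_take_drop]
    exact Nat.le_add_right _ _

theorem offset_of_nv_le (h : G.nv ≤ n) : G.offset n = G.omega := by
  rw [offset, List.take_of_length_le h, omega]

theorem v_lt_v_iff : G.v a < G.v b ↔ ∃ i < G.nv, a ≤ G.offset i ∧ G.offset i < b := by
  have v_eq_card (k : ℕ) : G.v k = ((Finset.range G.nv).filter (G.offset · < k)).card :=
    Nat.count_eq_card_filter_range (G.offset · < k) G.nv
  rw [v_eq_card, v_eq_card]
  constructor
  · intro h
    by_contra! hno
    refine h.not_ge (Finset.card_le_card fun i hi ↦ ?_)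
    rw [Finset.mem_filter, Finset.mem_range] at hi ⊢
    exact ⟨hi.1, not_le.1 fun hai ↦ (hno i hi.1 hai).not_gt hi.2⟩
  · rintro ⟨i, hi, hai, hib⟩
    refine Finset.card_lt_card (Finset.ssubset_iff_of_subset ?_ |>.2 ⟨i, ?_, ?_⟩)
    · exact Finset.monotone_filter_right _ fun j _ hj ↦ hj.trans (hai.trans_lt hib)
    · exact Finset.mem_filter.2 ⟨Finset.mem_range.2 hi, hib⟩
    · exact fun hmem ↦ hai.not_gt (Finset.mem_filter.1 hmem).2

theorem Valid.up_bounds (hG : G.Valid) (hk : k ∈ G.up) : 0 < k ∧ k ≤ G.omega :=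
  Finset.mem_Icc.1 (hG.2.1 hk)

theorem Valid.dn_bounds (hG : G.Valid) (hk : k ∈ G.dn) : 0 < k ∧ k ≤ G.omega :=
  Finset.mem_Icc.1 (hG.2.2.1 hk)

theorem Valid.mem_up (hG : G.Valid) (hab : (a, b) ∈ G.ed) : a ∈ G.up := (hG.2.2.2.1 _ hab).1

theorem Valid.mem_dn (hG : G.Valid) (hab : (a, b) ∈ G.ed) : b ∈ G.dn := (hG.2.2.2.1 _ hab).2.1

theorem Valid.exists_offset (hG : G.Valid) (hab : (a, b) ∈ G.ed) :
    ∃ i < G.nv, a ≤ G.offset i ∧ G.offset i < b :=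
  v_lt_v_iff.1 (hG.2.2.2.1 _ hab).2.2

theorem Valid.ed_bounds (hG : G.Valid) (hab : (a, b) ∈ G.ed) : 0 < a ∧ a < b ∧ b ≤ G.omega := by
  obtain ⟨i, -, hai, hib⟩ := hG.exists_offset hab
  exact ⟨(hG.up_bounds (hG.mem_up hab)).1, hai.trans_lt hib, (hG.dn_bounds (hG.mem_dn hab)).2⟩

theorem Valid.ed_right_unique (hG : G.Valid) {b' : ℕ} (hab : (a, b) ∈ G.ed)
    (hab' : (a, b') ∈ G.ed) : b = b' :=
  congrArg Prod.snd (hG.2.2.2.2.1 _ hab _ hab' rfl)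

theorem Valid.ed_left_unique (hG : G.Valid) {a' : ℕ} (hab : (a, b) ∈ G.ed)
    (hab' : (a', b) ∈ G.ed) : a = a' :=
  congrArg Prod.fst (hG.2.2.2.2.2 _ hab _ hab' rfl)

theorem Valid.mk (hlam : ∀ x ∈ G.lam, 0 < x) (hup : ∀ k ∈ G.up, 0 < k ∧ k ≤ G.omega)
    (hdn : ∀ k ∈ G.dn, 0 < k ∧ k ≤ G.omega)
    (hed : ∀ a b, (a, b) ∈ G.ed →
      a ∈ G.up ∧ b ∈ G.dn ∧ ∃ i < G.nv, a ≤ G.offset i ∧ G.offset i < b)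
    (hright : ∀ a b b', (a, b) ∈ G.ed → (a, b') ∈ G.ed → b = b')
    (hleft : ∀ a a' b, (a, b) ∈ G.ed → (a', b) ∈ G.ed → a = a') : G.Valid := by
  refine ⟨hlam, fun k hk ↦ Finset.mem_Icc.2 (hup k hk), fun k hk ↦ Finset.mem_Icc.2 (hdn k hk),
    fun p hp ↦ ?_, ?_, ?_⟩
  · obtain ⟨ha, hb, hlt⟩ := hed p.1 p.2 hp
    exact ⟨ha, hb, v_lt_v_iff.2 hlt⟩
  · rintro ⟨a, b⟩ hab ⟨_, b'⟩ hab' rfl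
    exact congrArg _ (hright a b b' hab hab')
  · rintro ⟨a, b⟩ hab ⟨a', _⟩ hab' rfl
    exact congrArg (·, b) (hleft a a' b hab hab')

/-! ### Cutting a diagram in two -/

/-- The diagram induced on the first `n` vertices. -/
def take (G : BD) (n : ℕ) : BD where
  lam := G.lam.take n
  up := G.up.filter (· ≤ G.offset n)
  dn := G.dn.filter (· ≤ G.offset n)
  ed := G.ed.filter fun p ↦ p.1 ≤ G.offset n ∧ p.2 ≤ G.offset n

/-- The diagram induced on all vertices but the first `n`, with its half-edges relabelled from
`1`. -/
def drop (G : BD) (n : ℕ) : BD where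
  lam := G.lam.drop n
  up := (G.up.filter (G.offset n < ·)).image (· - G.offset n)
  dn := (G.dn.filter (G.offset n < ·)).image (· - G.offset n)
  ed := (G.ed.filter fun p ↦ G.offset n < p.1 ∧ G.offset n < p.2).image
    fun p ↦ (p.1 - G.offset n, p.2 - G.offset n)

/-- The edges from the first `n` vertices to the others, as pairs of half-edges of `G.take n` and
`G.drop n`: the matching along which `G` is the composition of these two diagrams. -/
def crossing (G : BD) (n : ℕ) : Finset (ℕ × ℕ) :=
  (G.ed.filter fun p ↦ p.1 ≤ G.offset n ∧ G.offset n < p.2).image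
    fun p ↦ (p.1, p.2 - G.offset n)

theorem mem_take_up : k ∈ (G.take n).up ↔ k ∈ G.up ∧ k ≤ G.offset n := Finset.mem_filter

theorem mem_take_dn : k ∈ (G.take n).dn ↔ k ∈ G.dn ∧ k ≤ G.offset n := Finset.mem_filter

theorem mem_take_ed :
    (a, b) ∈ (G.take n).ed ↔ (a, b) ∈ G.ed ∧ a ≤ G.offset n ∧ b ≤ G.offset n :=
  Finset.mem_filter

theorem mem_image_sub_filter_lt {t : Finset ℕ} {c : ℕ} :
    k ∈ (t.filter (c < ·)).image (· - c) ↔ 0 < k ∧ k + c ∈ t := by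
  simp only [Finset.mem_image, Finset.mem_filter]
  constructor
  · rintro ⟨j, ⟨hj, hcj⟩, rfl⟩
    exact ⟨Nat.sub_pos_of_lt hcj, by rwa [Nat.sub_add_cancel hcj.le]⟩
  · rintro ⟨hk, hmem⟩
    exact ⟨k + c, ⟨hmem, Nat.lt_add_of_pos_left hk⟩, Nat.add_sub_cancel k c⟩

theorem mem_drop_up : k ∈ (G.drop n).up ↔ 0 < k ∧ k + G.offset n ∈ G.up :=
  mem_image_sub_filter_lt

theorem mem_drop_dn : k ∈ (G.drop n).dn ↔ 0 < k ∧ k + G.offset n ∈ G.dn :=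
  mem_image_sub_filter_lt

theorem mem_drop_ed :
    (a, b) ∈ (G.drop n).ed ↔ 0 < a ∧ 0 < b ∧ (a + G.offset n, b + G.offset n) ∈ G.ed := by
  simp only [drop, Finset.mem_image, Finset.mem_filter, Prod.exists, Prod.mk.injEq]
  constructor
  · rintro ⟨i, j, ⟨hij, hi, hj⟩, rfl, rfl⟩
    rw [Nat.sub_add_cancel hi.le, Nat.sub_add_cancel hj.le]
    exact ⟨Nat.sub_pos_of_lt hi, Nat.sub_pos_of_lt hj, hij⟩
  · rintro ⟨ha, hb, hab⟩
    exact ⟨_, _, ⟨hab, by omega, by omega⟩, by omega, by omega⟩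

theorem mem_crossing :
    (a, b) ∈ G.crossing n ↔ a ≤ G.offset n ∧ 0 < b ∧ (a, b + G.offset n) ∈ G.ed := by
  simp only [crossing, Finset.mem_image, Finset.mem_filter, Prod.exists, Prod.mk.injEq]
  constructor
  · rintro ⟨i, j, ⟨hij, hi, hj⟩, rfl, rfl⟩
    rw [Nat.sub_add_cancel hj.le]
    exact ⟨hi, Nat.sub_pos_of_lt hj, hij⟩
  · rintro ⟨ha, hb, hab⟩
    exact ⟨_, _, ⟨hab, ha, by omega⟩, rfl, by omega⟩

theorem nv_take (G : BD) (n : ℕ) : (G.take n).nv = min n G.nv := List.length_take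

theorem nv_drop (G : BD) (n : ℕ) : (G.drop n).nv = G.nv - n := List.length_drop

theorem omega_take (G : BD) (n : ℕ) : (G.take n).omega = G.offset n := rfl

theorem offset_take (h : m ≤ n) : (G.take n).offset m = G.offset m := by
  rw [offset, take, List.take_take, min_eq_left h, offset]

theorem offset_add_offset_drop (G : BD) (m n : ℕ) :
    G.offset m + (G.drop m).offset n = G.offset (m + n) :=
  G.offset_add_sum_take_drop m n

theorem offset_add_omega_drop (G : BD) (n : ℕ) : G.offset n + (G.drop n).omega = G.omega := by
  rw [omega, omega, offset, drop, List.sum_take_add_sum_drop]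

theorem take_take (h : m ≤ n) : (G.take n).take m = G.take m := by
  have hmono := G.offset_mono h
  refine ext_mem (by rw [take, take, List.take_take, min_eq_left h, take]) ?_ ?_ ?_ <;>
  · simp only [mem_take_up, mem_take_dn, mem_take_ed, offset_take h]
    grind

theorem drop_drop (G : BD) (m n : ℕ) : (G.drop m).drop n = G.drop (m + n) := by
  have hoff := G.offset_add_offset_drop m n
  refine ext_mem List.drop_drop ?_ ?_ ?_ <;>
  · simp only [mem_drop_up, mem_drop_dn, mem_drop_ed]
    grind

theorem drop_take (G : BD) (m n : ℕ) : (G.take (m + n)).drop m = (G.drop m).take n := by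
  have hoff := G.offset_add_offset_drop m n
  refine ext_mem ?_ ?_ ?_ ?_
  · rw [drop, take, List.drop_take, Nat.add_sub_cancel_left, take, drop]
  all_goals
    simp only [mem_take_up, mem_take_dn, mem_take_ed, mem_drop_up, mem_drop_dn, mem_drop_ed,
      offset_take (Nat.le_add_right m n)]
    grind

theorem Valid.take (hG : G.Valid) (n : ℕ) : (G.take n).Valid := by
  refine Valid.mk (fun x hx ↦ hG.1 x (List.mem_of_mem_take hx)) ?_ ?_ ?_ ?_ ?_
  · exact fun k hk ↦ ⟨(hG.up_bounds (mem_take_up.1 hk).1).1, (mem_take_up.1 hk).2⟩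
  · exact fun k hk ↦ ⟨(hG.dn_bounds (mem_take_dn.1 hk).1).1, (mem_take_dn.1 hk).2⟩
  · intro a b hab
    obtain ⟨hab, han, hbn⟩ := mem_take_ed.1 hab
    obtain ⟨i, hi, hai, hib⟩ := hG.exists_offset hab
    have hin : i < n := G.offset_mono.reflect_lt (hib.trans_le hbn)
    refine ⟨mem_take_up.2 ⟨hG.mem_up hab, han⟩, mem_take_dn.2 ⟨hG.mem_dn hab, hbn⟩, i, ?_⟩
    rw [nv_take, offset_take hin.le]
    exact ⟨lt_min hin hi, hai, hib⟩
  · exact fun a b b' hab hab' ↦ hG.ed_right_unique (mem_take_ed.1 hab).1 (mem_take_ed.1 hab').1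
  · exact fun a a' b hab hab' ↦ hG.ed_left_unique (mem_take_ed.1 hab).1 (mem_take_ed.1 hab').1

theorem Valid.drop (hG : G.Valid) (n : ℕ) : (G.drop n).Valid := by
  have homega := G.offset_add_omega_drop n
  refine Valid.mk (fun x hx ↦ hG.1 x (List.mem_of_mem_drop hx)) ?_ ?_ ?_ ?_ ?_
  · intro k hk
    obtain ⟨hk, hmem⟩ := mem_drop_up.1 hk
    have := hG.up_bounds hmem
    omega
  · intro k hk
    obtain ⟨hk, hmem⟩ := mem_drop_dn.1 hk
    have := hG.dn_bounds hmem
    omega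
  · intro a b hab
    obtain ⟨ha, hb, hab⟩ := mem_drop_ed.1 hab
    obtain ⟨i, hi, hai, hib⟩ := hG.exists_offset hab
    have hni : n < i := G.offset_mono.reflect_lt (by omega)
    have hoff := G.offset_add_offset_drop n (i - n)
    rw [Nat.add_sub_cancel' hni.le] at hoff
    refine ⟨mem_drop_up.2 ⟨ha, hG.mem_up hab⟩, mem_drop_dn.2 ⟨hb, hG.mem_dn hab⟩, i - n, ?_⟩
    rw [nv_drop]
    omega
  · intro a b b' hab hab'
    exact Nat.add_right_cancel (hG.ed_right_unique (mem_drop_ed.1 hab).2.2 (mem_drop_ed.1 hab').2.2)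
  · intro a a' b hab hab'
    exact Nat.add_right_cancel (hG.ed_left_unique (mem_drop_ed.1 hab).2.2 (mem_drop_ed.1 hab').2.2)

theorem Valid.eq_eps (hG : G.Valid) (h : G.nv = 0) : G = eps := by
  have hlam : G.lam = [] := List.eq_nil_of_length_eq_zero h
  have homega : G.omega = 0 := by rw [omega, hlam, List.sum_nil]
  refine ext_mem hlam (fun k ↦ ?_) (fun k ↦ ?_) (fun a b ↦ ?_) <;>
    refine iff_of_false (fun hmem ↦ ?_) (Finset.notMem_empty _)
  · have := hG.up_bounds hmem
    omega
  · have := hG.dn_bounds hmem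
    omega
  · have := hG.ed_bounds hmem
    omega

theorem Valid.drop_zero (hG : G.Valid) : G.drop 0 = G := by
  refine ext_mem rfl (fun k ↦ ?_) (fun k ↦ ?_) (fun a b ↦ ?_)
  · exact mem_drop_up.trans (and_iff_right_of_imp fun h ↦ (hG.up_bounds h).1)
  · exact mem_drop_dn.trans (and_iff_right_of_imp fun h ↦ (hG.dn_bounds h).1)
  · have hpos (h : (a, b) ∈ G.ed) : 0 < a ∧ 0 < b := by
      have := hG.ed_bounds h
      omega
    rw [mem_drop_ed, ← and_assoc]
    exact and_iff_right_of_imp hpos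

/-! ### Compositions -/

theorem mem_HfUp : k ∈ G.HfUp ↔ k ∈ G.up ∧ ∀ b, (k, b) ∉ G.ed := by
  simp [HfUp]

theorem mem_HfDn : k ∈ G.HfDn ↔ k ∈ G.dn ∧ ∀ a, (a, k) ∉ G.ed := by
  simp [HfDn]

theorem mem_matchings : s ∈ matchings A B ↔ Matching A B s := by
  simp only [matchings, Finset.mem_filter, Finset.mem_powerset]
  exact and_iff_right_of_imp fun hs p hp ↦ Finset.mem_product.2 (hs.1 p hp)

theorem matching_empty (A B : BD) : Matching A B ∅ := by
  simp [Matching]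

theorem Matching.left_mem (hs : Matching A B s) (hab : (a, b) ∈ s) :
    a ∈ A.up ∧ ∀ c, (a, c) ∉ A.ed :=
  mem_HfUp.1 (hs.1 _ hab).1

theorem Matching.right_mem (hs : Matching A B s) (hab : (a, b) ∈ s) :
    b ∈ B.dn ∧ ∀ c, (c, b) ∉ B.ed :=
  mem_HfDn.1 (hs.1 _ hab).2

theorem Matching.right_unique (hs : Matching A B s) {b' : ℕ} (hab : (a, b) ∈ s)
    (hab' : (a, b') ∈ s) : b = b' :=
  congrArg Prod.snd (hs.2.1 _ hab _ hab' rfl)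

theorem Matching.left_unique (hs : Matching A B s) {a' : ℕ} (hab : (a, b) ∈ s)
    (hab' : (a', b) ∈ s) : a = a' :=
  congrArg Prod.fst (hs.2.2 _ hab _ hab' rfl)

theorem Matching.bounds (hs : Matching A B s) (hA : A.Valid) (hB : B.Valid) (hab : (a, b) ∈ s) :
    (0 < a ∧ a ≤ A.omega) ∧ 0 < b ∧ b ≤ B.omega :=
  ⟨hA.up_bounds (hs.left_mem hab).1, hB.dn_bounds (hs.right_mem hab).1⟩

theorem mem_image_add {t : Finset ℕ} {c : ℕ} :
    k ∈ t.image (· + c) ↔ c ≤ k ∧ k - c ∈ t := by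
  rw [Finset.mem_image]
  constructor
  · rintro ⟨j, hj, rfl⟩
    exact ⟨Nat.le_add_left c j, by rwa [Nat.add_sub_cancel]⟩
  · exact fun ⟨hck, hmem⟩ ↦ ⟨_, hmem, Nat.sub_add_cancel hck⟩

theorem mem_comp_up :
    k ∈ (comp A B s).up ↔ k ∈ A.up ∨ A.omega ≤ k ∧ k - A.omega ∈ B.up :=
  Finset.mem_union.trans (or_congr_right mem_image_add)

theorem mem_comp_dn :
    k ∈ (comp A B s).dn ↔ k ∈ A.dn ∨ A.omega ≤ k ∧ k - A.omega ∈ B.dn :=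
  Finset.mem_union.trans (or_congr_right mem_image_add)

theorem mem_comp_ed : (a, b) ∈ (comp A B s).ed ↔
    (a, b) ∈ A.ed ∨ (A.omega ≤ b ∧ (a, b - A.omega) ∈ s) ∨
      A.omega ≤ a ∧ A.omega ≤ b ∧ (a - A.omega, b - A.omega) ∈ B.ed := by
  simp only [comp, Finset.mem_union, Finset.mem_image, Prod.exists, Prod.mk.injEq, or_assoc]
  refine or_congr_right (or_congr ⟨?_, ?_⟩ ⟨?_, ?_⟩)
  · rintro ⟨i, j, hij, rfl, rfl⟩
    exact ⟨Nat.le_add_left _ _, by rwa [Nat.add_sub_cancel]⟩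
  · exact fun ⟨hb, hmem⟩ ↦ ⟨_, _, hmem, rfl, Nat.sub_add_cancel hb⟩
  · rintro ⟨i, j, hij, rfl, rfl⟩
    refine ⟨Nat.le_add_left _ _, Nat.le_add_left _ _, ?_⟩
    rwa [Nat.add_sub_cancel, Nat.add_sub_cancel]
  · exact fun ⟨ha, hb, hmem⟩ ↦ ⟨_, _, hmem, Nat.sub_add_cancel ha, Nat.sub_add_cancel hb⟩

theorem nv_comp (A B : BD) (s : Finset (ℕ × ℕ)) : (comp A B s).nv = A.nv + B.nv :=
  List.length_append

theorem omega_comp (A B : BD) (s : Finset (ℕ × ℕ)) : (comp A B s).omega = A.omega + B.omega :=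
  List.sum_append

theorem offset_comp_of_le (h : i ≤ A.nv) : (comp A B s).offset i = A.offset i := by
  rw [offset, comp, List.take_append_of_le_length h, offset]

theorem offset_comp_add (A B : BD) (s : Finset (ℕ × ℕ)) (i : ℕ) :
    (comp A B s).offset (A.nv + i) = A.omega + B.offset i := by
  rw [offset, comp, nv, List.take_length_add_append, List.sum_append, omega, offset]

theorem offset_comp_nv (A B : BD) (s : Finset (ℕ × ℕ)) : (comp A B s).offset A.nv = A.omega := by
  rw [offset_comp_of_le le_rfl, offset_of_nv_le le_rfl]

theorem Valid.comp (hA : A.Valid) (hB : B.Valid) (hs : Matching A B s) :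
    (comp A B s).Valid := by
  refine Valid.mk (fun x hx ↦ (List.mem_append.1 hx).elim (hA.1 x) (hB.1 x)) ?_ ?_ ?_ ?_ ?_
  · intro k hk
    rw [mem_comp_up] at hk
    rw [omega_comp]
    grind [→ Valid.up_bounds]
  · intro k hk
    rw [mem_comp_dn] at hk
    rw [omega_comp]
    grind [→ Valid.dn_bounds]
  · intro a b hab
    rw [mem_comp_up, mem_comp_dn, nv_comp]
    rcases mem_comp_ed.1 hab with hab | ⟨hb, hab⟩ | ⟨ha, hb, hab⟩
    · obtain ⟨i, hi, hai, hib⟩ := hA.exists_offset hab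
      refine ⟨.inl (hA.mem_up hab), .inl (hA.mem_dn hab), i, by omega, ?_⟩
      rw [offset_comp_of_le hi.le]
      exact ⟨hai, hib⟩
    · have hbounds := hs.bounds hA hB hab
      have hnv : B.nv ≠ 0 := fun h ↦ by
        have : B.omega = 0 := congrArg omega (hB.eq_eps h)
        omega
      refine ⟨.inl (hs.left_mem hab).1, .inr ⟨hb, (hs.right_mem hab).1⟩, A.nv, by omega, ?_⟩
      rw [offset_comp_nv]
      omega
    · obtain ⟨i, hi, hai, hib⟩ := hB.exists_offset hab
      refine ⟨.inr ⟨ha, hB.mem_up hab⟩, .inr ⟨hb, hB.mem_dn hab⟩, A.nv + i, by omega, ?_⟩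
      rw [offset_comp_add]
      omega
  · intro a b b' hab hab'
    rw [mem_comp_ed] at hab hab'
    grind [→ Valid.ed_bounds, → Matching.bounds, → Matching.left_mem, → Valid.ed_right_unique,
      → Matching.right_unique]
  · intro a a' b hab hab'
    rw [mem_comp_ed] at hab hab'
    grind [→ Valid.ed_bounds, → Matching.bounds, → Matching.right_mem, → Valid.ed_left_unique,
      → Matching.left_unique]

theorem take_comp (hA : A.Valid) (hB : B.Valid) (hs : Matching A B s) :
    (comp A B s).take A.nv = A := by
  refine ext_mem List.take_left (fun k ↦ ?_) (fun k ↦ ?_) (fun a b ↦ ?_)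
  · rw [mem_take_up, mem_comp_up, offset_comp_nv]
    grind [→ Valid.up_bounds]
  · rw [mem_take_dn, mem_comp_dn, offset_comp_nv]
    grind [→ Valid.dn_bounds]
  · rw [mem_take_ed, mem_comp_ed, offset_comp_nv]
    grind [→ Valid.ed_bounds, → Matching.bounds]

theorem drop_comp (hA : A.Valid) (hB : B.Valid) (hs : Matching A B s) :
    (comp A B s).drop A.nv = B := by
  refine ext_mem List.drop_left (fun k ↦ ?_) (fun k ↦ ?_) (fun a b ↦ ?_)
  · rw [mem_drop_up, mem_comp_up, offset_comp_nv, Nat.add_sub_cancel]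
    grind [→ Valid.up_bounds]
  · rw [mem_drop_dn, mem_comp_dn, offset_comp_nv, Nat.add_sub_cancel]
    grind [→ Valid.dn_bounds]
  · rw [mem_drop_ed, mem_comp_ed, offset_comp_nv, Nat.add_sub_cancel, Nat.add_sub_cancel]
    grind [→ Valid.ed_bounds, → Matching.bounds]

theorem crossing_comp (hA : A.Valid) (hB : B.Valid) (hs : Matching A B s) :
    (comp A B s).crossing A.nv = s := by
  ext ⟨a, b⟩
  rw [mem_crossing, mem_comp_ed, offset_comp_nv, Nat.add_sub_cancel]
  grind [→ Valid.ed_bounds, → Matching.bounds]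

theorem comp_take_drop (hG : G.Valid) (n : ℕ) :
    comp (G.take n) (G.drop n) (G.crossing n) = G := by
  refine ext_mem (List.take_append_drop n G.lam) (fun k ↦ ?_) (fun k ↦ ?_) (fun a b ↦ ?_)
  · rw [mem_comp_up, mem_take_up, mem_drop_up, omega_take]
    grind
  · rw [mem_comp_dn, mem_take_dn, mem_drop_dn, omega_take]
    grind
  · rw [mem_comp_ed, mem_take_ed, mem_drop_ed, mem_crossing, omega_take]
    grind [→ Valid.ed_bounds]

theorem matching_crossing (hG : G.Valid) (n : ℕ) :
    Matching (G.take n) (G.drop n) (G.crossing n) := by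
  refine ⟨?_, ?_, ?_⟩
  · rintro ⟨a, b⟩ hab
    obtain ⟨ha, hb, hab⟩ := mem_crossing.1 hab
    simp only [mem_HfUp, mem_HfDn, mem_take_up, mem_drop_dn, mem_take_ed, mem_drop_ed]
    refine ⟨⟨⟨hG.mem_up hab, ha⟩, fun c hc ↦ ?_⟩, ⟨hb, hG.mem_dn hab⟩, fun c hc ↦ ?_⟩
    · have := hG.ed_right_unique hab hc.1
      omega
    · have := hG.ed_left_unique hab hc.2.2
      omega
  · rintro ⟨a, b⟩ hab ⟨_, b'⟩ hab' rfl
    have := hG.ed_right_unique (mem_crossing.1 hab).2.2 (mem_crossing.1 hab').2.2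
    rw [Nat.add_right_cancel this]
  · rintro ⟨a, b⟩ hab ⟨a', _⟩ hab' rfl
    rw [hG.ed_left_unique (mem_crossing.1 hab).2.2 (mem_crossing.1 hab').2.2]

theorem matching_and_comp_eq_iff (hA : A.Valid) (hB : B.Valid) (hG : G.Valid) :
    Matching A B s ∧ comp A B s = G ↔
      (G.take A.nv = A ∧ G.drop A.nv = B) ∧ G.crossing A.nv = s := by
  constructor
  · rintro ⟨hs, rfl⟩
    exact ⟨⟨take_comp hA hB hs, drop_comp hA hB hs⟩, crossing_comp hA hB hs⟩
  · rintro ⟨⟨htake, hdrop⟩, rfl⟩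
    have hmatch := matching_crossing hG A.nv
    have hcomp := comp_take_drop hG A.nv
    rw [htake, hdrop] at hmatch hcomp
    exact ⟨hmatch, hcomp⟩

/-! ### Juxtapositions and indivisible diagrams -/

theorem Valid.juxt (hA : A.Valid) (hB : B.Valid) : (juxt A B).Valid :=
  hA.comp hB (matching_empty A B)

theorem take_juxt (hA : A.Valid) (hB : B.Valid) : (juxt A B).take A.nv = A :=
  take_comp hA hB (matching_empty A B)

theorem drop_juxt (hA : A.Valid) (hB : B.Valid) : (juxt A B).drop A.nv = B :=
  drop_comp hA hB (matching_empty A B)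

theorem crossing_juxt (hA : A.Valid) (hB : B.Valid) : (juxt A B).crossing A.nv = ∅ :=
  crossing_comp hA hB (matching_empty A B)

theorem juxt_take_drop (hG : G.Valid) (h : G.crossing n = ∅) :
    juxt (G.take n) (G.drop n) = G := by
  rw [BD.juxt, ← h, comp_take_drop hG]

theorem Valid.take_zero (hG : G.Valid) : G.take 0 = eps :=
  (hG.take 0).eq_eps (by rw [nv_take, Nat.zero_min])

theorem Valid.nv_pos (hG : G.Valid) (h : G ≠ eps) : 0 < G.nv :=
  Nat.pos_of_ne_zero (mt hG.eq_eps h)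

theorem Valid.eps_juxt (hG : G.Valid) : BD.juxt eps G = G := by
  rw [← (eps_valid.juxt hG).drop_zero]
  exact drop_juxt eps_valid hG

theorem juxt_eps (G : BD) : juxt G eps = G := by
  simp [juxt, comp, eps]

theorem Valid.indiv_iff_crossing_nonempty (hG : G.Valid) :
    G.Indiv ↔ ∀ n, 0 < n → n < G.nv → (G.crossing n).Nonempty := by
  constructor
  · intro hindiv n hn hnG
    rw [Finset.nonempty_iff_ne_empty]
    intro hempty
    rcases hindiv _ _ (hG.take n) (hG.drop n) (juxt_take_drop hG hempty).symm with h | h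
    · have hnv := congrArg nv h
      rw [nv_take] at hnv
      omega
    · have hnv := congrArg nv h
      rw [nv_drop] at hnv
      omega
  · rintro hcross A B hA hB rfl
    by_contra! hne
    have hnvA : 0 < A.nv := hA.nv_pos (by rintro rfl; exact hne.2 hB.eps_juxt.symm)
    have hnvB : 0 < B.nv := hB.nv_pos (by rintro rfl; exact hne.1 (juxt_eps A).symm)
    have hlt : A.nv < (BD.juxt A B).nv := (Nat.lt_add_of_pos_right hnvB).trans_eq (nv_comp ..).symm
    exact (hcross A.nv hnvA hlt).ne_empty (crossing_juxt hA hB)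

theorem crossing_take_subset (h : m ≤ n) : (G.take n).crossing m ⊆ G.crossing m := by
  rintro ⟨a, b⟩ hab
  rw [mem_crossing, mem_take_ed, offset_take h] at hab
  exact mem_crossing.2 ⟨hab.1, hab.2.1, hab.2.2.1⟩

theorem crossing_eq_empty_of_take (h : m ≤ n) (hn : G.crossing n = ∅)
    (hm : (G.take n).crossing m = ∅) : G.crossing m = ∅ := by
  rw [Finset.eq_empty_iff_forall_notMem] at hn hm ⊢
  rintro ⟨a, b⟩ hab
  obtain ⟨ha, hb, hab⟩ := mem_crossing.1 hab
  have hmono := G.offset_mono h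
  rcases le_or_gt (b + G.offset m) (G.offset n) with hbn | hbn
  · refine hm (a, b) (mem_crossing.2 ?_)
    rw [mem_take_ed, offset_take h]
    exact ⟨ha, hb, hab, ha.trans hmono, hbn⟩
  · refine hn (a, b + G.offset m - G.offset n) (mem_crossing.2 ?_)
    rw [Nat.sub_add_cancel hbn.le]
    exact ⟨ha.trans hmono, Nat.sub_pos_of_lt hbn, hab⟩

theorem Valid.crossing_nv (hG : G.Valid) : G.crossing G.nv = ∅ := by
  refine Finset.eq_empty_of_forall_notMem fun ⟨a, b⟩ hab ↦ ?_
  obtain ⟨-, hb, hab⟩ := mem_crossing.1 hab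
  have hbounds := hG.ed_bounds hab
  rw [offset_of_nv_le le_rfl] at hbounds
  omega

theorem Valid.exists_indiv_take (hG : G.Valid) (h : G ≠ eps) :
    ∃ n, 0 < n ∧ n ≤ G.nv ∧ G.crossing n = ∅ ∧ (G.take n).Indiv := by
  have hex : ∃ n, 0 < n ∧ G.crossing n = ∅ := ⟨G.nv, hG.nv_pos h, hG.crossing_nv⟩
  classical
  obtain ⟨hpos, hempty⟩ := Nat.find_spec hex
  refine ⟨Nat.find hex, hpos, Nat.find_min' hex ⟨hG.nv_pos h, hG.crossing_nv⟩, hempty, ?_⟩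
  refine (hG.take _).indiv_iff_crossing_nonempty.2 fun m hm hlt ↦ ?_
  have hmn : m < Nat.find hex := hlt.trans_le ((nv_take ..).trans_le (min_le_left _ _))
  refine Finset.nonempty_iff_ne_empty.2 fun hm' ↦ Nat.find_min hex hmn ⟨hm, ?_⟩
  exact crossing_eq_empty_of_take hmn.le hempty hm'

theorem Indiv.nv_le_of_juxt_eq_juxt {C D : BD} (hindiv : C.Indiv) (hA : A.Valid) (hB : B.Valid)
    (hC : C.Valid) (hD : D.Valid) (hne : A ≠ eps) (h : juxt A B = juxt C D) : C.nv ≤ A.nv := by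
  by_contra! hlt
  obtain ⟨p, hp⟩ := hC.indiv_iff_crossing_nonempty.1 hindiv A.nv (hA.nv_pos hne) hlt
  have hmem : p ∈ (juxt A B).crossing A.nv := by
    rw [← take_juxt hC hD, ← h] at hp
    exact crossing_take_subset hlt.le hp
  rw [crossing_juxt hA hB] at hmem
  exact Finset.notMem_empty p hmem

theorem juxt_inj_of_indiv {C D : BD} (hA : A.Valid) (hB : B.Valid) (hC : C.Valid) (hD : D.Valid)
    (hAi : A.Indiv) (hCi : C.Indiv) (hA₀ : A ≠ eps) (hC₀ : C ≠ eps) :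
    juxt A B = juxt C D ↔ A = C ∧ B = D := by
  refine ⟨fun h ↦ ?_, fun ⟨hAC, hBD⟩ ↦ by rw [hAC, hBD]⟩
  have hnv : A.nv = C.nv :=
    (hAi.nv_le_of_juxt_eq_juxt hC hD hA hB hC₀ h.symm).antisymm
      (hCi.nv_le_of_juxt_eq_juxt hA hB hC hD hA₀ h)
  constructor
  · rw [← take_juxt hA hB, h, hnv, take_juxt hC hD]
  · rw [← drop_juxt hA hB, h, hnv, drop_juxt hC hD]

/-- `A ≤ B` when `A` arises from `B` by cutting edges into pairs of free half-edges. -/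
instance : PartialOrder BD where
  le A B := A.lam = B.lam ∧ A.up = B.up ∧ A.dn = B.dn ∧ A.ed ⊆ B.ed
  le_refl _ := ⟨rfl, rfl, rfl, subset_rfl⟩
  le_trans _ _ _ h h' :=
    ⟨h.1.trans h'.1, h.2.1.trans h'.2.1, h.2.2.1.trans h'.2.2.1, h.2.2.2.trans h'.2.2.2⟩
  le_antisymm _ _ h h' :=
    BD.mk.injEq .. ▸ ⟨h.1, h.2.1, h.2.2.1, h.2.2.2.antisymm h'.2.2.2⟩

theorem juxt_le_comp (A B : BD) (s : Finset (ℕ × ℕ)) : juxt A B ≤ comp A B s :=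
  ⟨rfl, rfl, rfl, Finset.union_subset_union_left <| Finset.union_subset_union_right <|
    Finset.image_subset_image <| Finset.empty_subset s⟩

theorem juxt_mono_right (A : BD) : Monotone (juxt A) := by
  rintro ⟨_, _, _, t⟩ ⟨_, _, _, t'⟩ ⟨rfl, rfl, rfl, hed⟩
  exact ⟨rfl, rfl, rfl, Finset.union_subset_union_right <| Finset.image_subset_image hed⟩

theorem Valid.ed_subset (hG : G.Valid) : G.ed ⊆ G.up ×ˢ G.dn :=
  fun _ hp ↦ Finset.mem_product.2 ⟨hG.mem_up hp, hG.mem_dn hp⟩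

theorem Valid.sdiff_ed_ssubset_of_lt (hB : B.Valid) (h : A < B) :
    (B.up ×ˢ B.dn) \ B.ed ⊂ (A.up ×ˢ A.dn) \ A.ed := by
  have hle := h.le
  obtain ⟨hlam, hup, hdn, hed⟩ := hle
  rw [hup, hdn]
  have hne : ¬B.ed ⊆ A.ed := fun hsub ↦ h.not_ge ⟨hlam.symm, hup.symm, hdn.symm, hsub⟩
  obtain ⟨p, hpB, hpA⟩ := Finset.not_subset.1 hne
  refine (Finset.ssubset_iff_of_subset (Finset.sdiff_subset_sdiff subset_rfl hed)).2 ⟨p, ?_, ?_⟩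
  · exact Finset.mem_sdiff.2 ⟨hB.ed_subset hpB, hpA⟩
  · exact fun hp ↦ (Finset.mem_sdiff.1 hp).2 hpB

end BD

theorem GSet.nv_pos (g : GSet) : 0 < g.1.1.nv := g.1.2.nv_pos g.2.1

namespace BDiagram

instance : WellFoundedGT BDiagram :=
  StrictAnti.wellFoundedGT (f := fun G : BDiagram ↦ (G.1.up ×ˢ G.1.dn) \ G.1.ed) fun _ B h ↦
    B.2.sdiff_ed_ssubset_of_lt h

/-- `BD.take` as an operation on B-diagrams. -/
def take (G : BDiagram) (n : ℕ) : BDiagram := ⟨G.1.take n, G.2.take n⟩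

/-- `BD.drop` as an operation on B-diagrams. -/
def drop (G : BDiagram) (n : ℕ) : BDiagram := ⟨G.1.drop n, G.2.drop n⟩

variable (G : BDiagram) (m n : ℕ)

theorem nv_take : (G.take n).1.nv = min n G.1.nv := BD.nv_take G.1 n

theorem nv_drop : (G.drop n).1.nv = G.1.nv - n := BD.nv_drop G.1 n

theorem take_add_take : (G.take (m + n)).take m = G.take m :=
  Subtype.ext (BD.take_take (Nat.le_add_right m n))

theorem take_add_drop : (G.take (m + n)).drop m = (G.drop m).take n :=
  Subtype.ext (BD.drop_take G.1 m n)

theorem drop_drop : (G.drop m).drop n = G.drop (m + n) := Subtype.ext (BD.drop_drop G.1 m n)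

/-- `BD.juxt` as an operation on B-diagrams. -/
def juxt (A B : BDiagram) : BDiagram := ⟨A.1.juxt B.1, A.2.juxt B.2⟩

/-- The juxtaposition of the letters of a word over 𝔾: the least diagram in the support of their
product. -/
def juxtWord : List GSet → BDiagram
  | [] => ⟨BD.eps, BD.eps_valid⟩
  | g :: w => juxt g.1 (juxtWord w)

variable {A B G : BDiagram}

theorem juxtWord_cons_ne_nil (g : GSet) (w : List GSet) : juxtWord (g :: w) ≠ juxtWord [] := by
  intro h
  have hnv : g.1.1.nv + (juxtWord w).1.nv = 0 :=
    (BD.nv_comp ..).symm.trans (congrArg (fun G : BDiagram ↦ G.1.nv) h)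
  have := g.nv_pos
  omega

theorem juxtWord_injective : Function.Injective juxtWord := by
  intro w w' h
  induction w generalizing w' with
  | nil =>
    cases w' with
    | nil => rfl
    | cons g w' => exact (juxtWord_cons_ne_nil g w' h.symm).elim
  | cons g w ih =>
    cases w' with
    | nil => exact (juxtWord_cons_ne_nil g w h).elim
    | cons g' w' =>
      obtain ⟨hg, hw⟩ := (BD.juxt_inj_of_indiv g.1.2 (juxtWord w).2 g'.1.2 (juxtWord w').2
        g.2.2 g'.2.2 g.2.1 g'.2.1).1 (congrArg Subtype.val h)
      rw [Subtype.ext (Subtype.ext hg), ih (Subtype.ext hw)]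

theorem juxtWord_surjective : Function.Surjective juxtWord := by
  intro G
  induction hnv : G.1.nv using Nat.strong_induction_on generalizing G with
  | _ N ih =>
    by_cases hG : G.1 = BD.eps
    · exact ⟨[], Subtype.ext hG.symm⟩
    obtain ⟨n, hn, hnG, hempty, hindiv⟩ := G.2.exists_indiv_take hG
    have hlt : (G.drop n).1.nv < N := by
      rw [← hnv]
      exact (BD.nv_drop ..).trans_lt (Nat.sub_lt (hn.trans_le hnG) hn)
    obtain ⟨w, hw⟩ := ih _ hlt (G.drop n) rfl
    have hne : (G.take n).1 ≠ BD.eps := fun h ↦ by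
      have hnv' : min n G.1.nv = 0 := (BD.nv_take ..).symm.trans (congrArg BD.nv h)
      omega
    refine ⟨⟨G.take n, hne, hindiv⟩ :: w, Subtype.ext ?_⟩
    rw [juxtWord, hw]
    exact BD.juxt_take_drop G.2 hempty

theorem juxt_le_of_take_eq (htake : G.take A.1.nv = A) (hdrop : B ≤ G.drop A.1.nv) :
    juxt A B ≤ G := by
  calc BD.juxt A.1 B.1
    _ ≤ BD.juxt A.1 (G.1.drop A.1.nv) := BD.juxt_mono_right A.1 hdrop
    _ = BD.juxt (G.1.take A.1.nv) (G.1.drop A.1.nv) := by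
      rw [show G.1.take A.1.nv = A.1 from congrArg Subtype.val htake]
    _ ≤ BD.comp (G.1.take A.1.nv) (G.1.drop A.1.nv) (G.1.crossing A.1.nv) :=
      BD.juxt_le_comp _ _ _
    _ = G.1 := BD.comp_take_drop G.2 _

end BDiagram

/-! ### The product as a convolution -/

section Convolution

open BDiagram Finset

theorem mkB_apply (G : BD) (C : BDiagram) : mkB G C = if G = C.1 then 1 else 0 := by
  classical
  by_cases hG : G.Valid
  · rw [mkB, dif_pos hG, Finsupp.single_apply]
    simp only [Subtype.ext_iff]
  · rw [mkB, dif_neg hG, Finsupp.zero_apply, if_neg]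
    rintro rfl
    exact hG C.2

theorem mulfun_apply (A B G : BDiagram) :
    mulfun A B G = if G.take A.1.nv = A ∧ G.drop A.1.nv = B then 1 else 0 := by
  have hmem (s : Finset (ℕ × ℕ)) : s ∈ BD.matchings A.1 B.1 ∧ BD.comp A.1 B.1 s = G.1 ↔
      (G.take A.1.nv = A ∧ G.drop A.1.nv = B) ∧ G.1.crossing A.1.nv = s := by
    rw [BD.mem_matchings, BD.matching_and_comp_eq_iff A.2 B.2 G.2, Subtype.ext_iff, Subtype.ext_iff]
    rfl
  rw [mulfun, Finsupp.finsetSum_apply]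
  simp only [mkB_apply]
  split_ifs with h
  · obtain ⟨hs, hcomp⟩ := (hmem _).2 ⟨h, rfl⟩
    rw [sum_eq_single_of_mem _ hs, if_pos hcomp]
    exact fun s hs' hne ↦ if_neg fun hcomp' ↦ hne ((hmem s).1 ⟨hs', hcomp'⟩).2.symm
  · exact sum_eq_zero fun s hs ↦ if_neg fun hcomp ↦ h ((hmem s).1 ⟨hs, hcomp⟩).1

theorem starB_single_single (A B : BDiagram) (a b : ℂ) :
    starB (Finsupp.single A a) (Finsupp.single B b) = (a * b) • mulfun A B := by
  simp [starB, liftB, mul_smul]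

theorem sum_antidiagonal_single_mul_single (A B G : BDiagram) (a b : ℂ) :
    ∑ p ∈ antidiagonal G.1.nv, Finsupp.single A a (G.take p.1) * Finsupp.single B b (G.drop p.1) =
      if G.take A.1.nv = A ∧ G.drop A.1.nv = B then a * b else 0 := by
  have hsupp : ∀ p ∈ antidiagonal G.1.nv,
      Finsupp.single A a (G.take p.1) * Finsupp.single B b (G.drop p.1) ≠ 0 →
        p.1 = A.1.nv ∧ G.take p.1 = A ∧ G.drop p.1 = B := by
    intro p hp hne
    have htake : G.take p.1 = A := (Finsupp.single_apply_ne_zero.1 (left_ne_zero_of_mul hne)).1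
    have hdrop : G.drop p.1 = B := (Finsupp.single_apply_ne_zero.1 (right_ne_zero_of_mul hne)).1
    refine ⟨?_, htake, hdrop⟩
    rw [← htake]
    exact (min_eq_left (Nat.le.intro (mem_antidiagonal.1 hp))).symm.trans (BD.nv_take ..).symm
  split_ifs with h
  · have hle : A.1.nv ≤ G.1.nv := by
      conv_lhs => rw [← h.1]
      exact (BD.nv_take ..).trans_le (min_le_right _ _)
    have hmem : (A.1.nv, G.1.nv - A.1.nv) ∈ antidiagonal G.1.nv :=
      mem_antidiagonal.2 (Nat.add_sub_cancel' hle)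
    rw [sum_eq_single_of_mem _ hmem, h.1, h.2, Finsupp.single_eq_same, Finsupp.single_eq_same]
    intro p hp hne
    by_contra hmul
    exact hne (HasAntidiagonal.antidiagonal_congr hp hmem |>.2 (hsupp p hp hmul).1)
  · refine sum_eq_zero fun p hp ↦ ?_
    by_contra hmul
    obtain ⟨hp₁, hAB⟩ := hsupp p hp hmul
    exact h (hp₁ ▸ hAB)

theorem starB_apply (x y : BSpace) (G : BDiagram) :
    starB x y G = ∑ p ∈ antidiagonal G.1.nv, x (G.take p.1) * y (G.drop p.1) := by
  induction x using Finsupp.induction_linear with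
  | zero => simp
  | add x₁ x₂ h₁ h₂ =>
    simp only [map_add, LinearMap.add_apply, Finsupp.add_apply, add_mul, h₁, h₂, sum_add_distrib]
  | single A a =>
    induction y using Finsupp.induction_linear with
    | zero => simp
    | add y₁ y₂ h₁ h₂ => simp only [map_add, Finsupp.add_apply, mul_add, h₁, h₂, sum_add_distrib]
    | single B b =>
      rw [sum_antidiagonal_single_mul_single, starB_single_single, Finsupp.smul_apply,
        mulfun_apply, smul_ite, smul_eq_mul, mul_one, smul_zero]

theorem starB_single_left_apply (A G : BDiagram) (y : BSpace) :
    starB (Finsupp.single A 1) y G = if G.take A.1.nv = A then y (G.drop A.1.nv) else 0 := by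
  induction y using Finsupp.induction_linear with
  | zero => simp
  | add y₁ y₂ h₁ h₂ =>
    rw [map_add, Finsupp.add_apply, h₁, h₂]
    split_ifs
    · rfl
    · exact add_zero 0
  | single B b =>
    rw [starB_single_single, Finsupp.smul_apply, mulfun_apply, Finsupp.single_apply]
    simp [ite_and, eq_comm]

theorem starB_assoc (x y z : BSpace) : starB (starB x y) z = starB x (starB y z) := by
  ext G
  simp only [starB_apply, sum_mul, mul_sum, sum_sigma']
  refine sum_nbij' (fun ⟨⟨_, j⟩, ⟨k, l⟩⟩ ↦ ⟨(k, l + j), (l, j)⟩)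
    (fun ⟨⟨i, _⟩, ⟨k, l⟩⟩ ↦ ⟨(i + k, l), (i, k)⟩) ?_ ?_ ?_ ?_ ?_ <;>
    rintro ⟨⟨i, j⟩, ⟨k, l⟩⟩ h <;>
    simp only [mem_sigma, HasAntidiagonal.mem_antidiagonal, nv_take, nv_drop] at h ⊢
  · omega
  · omega
  · obtain rfl : i = k + l := by omega
    rfl
  · obtain rfl : j = k + l := by omega
    rfl
  · obtain rfl : i = k + l := by omega
    rw [take_add_take, take_add_drop, drop_drop, mul_assoc]

theorem unitB_starB (y : BSpace) : starB unitB y = y := by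
  ext G
  rw [unitB, starB_single_left_apply, if_pos (Subtype.ext G.2.take_zero)]
  exact congrArg y (Subtype.ext G.2.drop_zero)

theorem wordProdB_cons (g : GSet) (w : List GSet) :
    wordProdB (g :: w) = starB (Finsupp.single g.1 1) (wordProdB w) := rfl

theorem wordProdB_append (u v : List GSet) :
    wordProdB (u ++ v) = starB (wordProdB u) (wordProdB v) := by
  induction u with
  | nil => exact (unitB_starB _).symm
  | cons g u ih => rw [List.cons_append, wordProdB_cons, ih, wordProdB_cons, starB_assoc]

theorem wordProdB_apply_juxtWord (w : List GSet) : wordProdB w (juxtWord w) = 1 := by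
  induction w with
  | nil => exact Finsupp.single_eq_same
  | cons g w ih =>
    have htake : (juxtWord (g :: w)).take g.1.1.nv = g.1 :=
      Subtype.ext (BD.take_juxt g.1.2 (juxtWord w).2)
    have hdrop : (juxtWord (g :: w)).drop g.1.1.nv = juxtWord w :=
      Subtype.ext (BD.drop_juxt g.1.2 (juxtWord w).2)
    rw [wordProdB_cons, starB_single_left_apply, if_pos htake, hdrop, ih]

theorem juxtWord_le_of_wordProdB_apply_ne_zero {w : List GSet} {G : BDiagram}
    (h : wordProdB w G ≠ 0) : juxtWord w ≤ G := by
  induction w generalizing G with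
  | nil => exact (Finsupp.single_apply_ne_zero.1 h).1.ge
  | cons g w ih =>
    rw [wordProdB_cons, starB_single_left_apply] at h
    obtain ⟨htake, hdrop⟩ := ite_ne_right_iff.1 h
    exact juxt_le_of_take_eq htake (ih hdrop)

end Convolution

theorem PsiB_eq_linearCombination : PsiB = Finsupp.linearCombination ℂ wordProdB := rfl

theorem PsiB_single (w : List GSet) : PsiB (Finsupp.single w 1) = wordProdB w := by
  rw [PsiB_eq_linearCombination, Finsupp.linearCombination_single, one_smul]

theorem PsiB_bijective : Function.Bijective PsiB := by
  rw [PsiB_eq_linearCombination]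
  constructor
  · exact linearIndependent_of_unitriangular BDiagram.juxtWord_injective wordProdB_apply_juxtWord
      fun _ _ ↦ juxtWord_le_of_wordProdB_apply_ne_zero
  · rw [← LinearMap.range_eq_top, Finsupp.range_linearCombination]
    exact span_range_eq_top_of_unitriangular BDiagram.juxtWord_surjective wordProdB_apply_juxtWord
      fun _ _ ↦ juxtWord_le_of_wordProdB_apply_ne_zero

/-- `(ℬ, ⋆)` is free on the nonempty indivisible B-diagrams: the unique
algebra morphism from the free associative algebra on 𝔾 to `(ℬ, ⋆)` sending each
generator to the corresponding basis element (namely, the linear map `PsiB`, which is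
multiplicative and unital) is an isomorphism of algebras. -/
theorem bspace_free_on_indivisible :
    Function.Bijective PsiB ∧
    (∀ u v : List GSet,
      PsiB (Finsupp.single (u ++ v) 1) =
        starB (PsiB (Finsupp.single u 1)) (PsiB (Finsupp.single v 1))) ∧
    PsiB (Finsupp.single [] 1) = unitB := by
  refine ⟨PsiB_bijective, fun u v ↦ ?_, PsiB_single []⟩
  rw [PsiB_single, PsiB_single, PsiB_single, wordProdB_append]
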